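/- arXiv:0911.2884 — 2 statements merged into one kernel-verified Lean document; each statement's English description precedes it below -/
import Mathlib

section
/- Let I = (L(u,v)) ⊂ S = K[x_1,…,x_n] be a lexsegment edge ideal determined by u = x_1 x_i with i ≥ 3 (so I is not initial) and v = x_j x_k with 2 ≤ j < k ≤ n and v ≠ x_{n-1}x_n (so I is not final), where u >_lex v. Then the Krull dimension of S/I is n − j. -/
/-!
A prime `P ⊇ I` of a squarefree monomial ideal `I` contains all the variables `x_t` in some vertex
cover of the underlying graph, so `S/P` is a quotient of the polynomial ring in the remaining
variables (`ringKrullDim_quotient_le_card`), which form an independent set of the graph. Since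
`dim (S/I)` is the supremum of `dim (S/P)` over primes `P ⊇ I` (`ringKrullDim_quotient_le_of_primes`),
it is at most the largest size of an independent set. For the graph of `L(x_1x_i, x_jx_k)` this is at
most `n - j` (`card_le_of_independent`): a vertex `p` with `2 ≤ p < j` is adjacent to every
other vertex except possibly `1`, so a set containing it has at most two elements, and
`2 ≤ n - j` because `v` is not final; otherwise the set lies in `{1, j, …, n}`, from which the edges
`{j, k}` or `{1, n}` and `{j, j+1}` remove enough vertices. Conversely `{j+1, …, n}` is independent,
so `S/I` maps onto the polynomial ring in `x_{j+1}, …, x_n`, of dimension `n - j`.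
-/

open MvPolynomial

/-- The variable `x_i` (1-based indexing) of `K[x_1,…,x_n]`. -/
noncomputable def xv (K : Type) [Field K] (n i : ℕ) : MvPolynomial (Fin n) K :=
  if h : i - 1 < n then MvPolynomial.X ⟨i - 1, h⟩ else 0

/-- `lexGE p q` : for sorted index pairs, the squarefree degree-2 monomial
`x_{p.1} x_{p.2}` is greater than or equal to `x_{q.1} x_{q.2}` in the
lexicographic order induced by `x_1 > x_2 > ⋯ > x_n`. -/
def lexGE (p q : ℕ × ℕ) : Prop := p.1 < q.1 ∨ (p.1 = q.1 ∧ p.2 ≤ q.2)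

/-- Strict lexicographic comparison of sorted index pairs. -/
def lexGT (p q : ℕ × ℕ) : Prop := p.1 < q.1 ∨ (p.1 = q.1 ∧ p.2 < q.2)

/-- Sorted index pairs in range `1,…,n`; these correspond exactly to the
squarefree monomials of degree 2 of `K[x_1,…,x_n]`. -/
def validPair (n : ℕ) (p : ℕ × ℕ) : Prop := 1 ≤ p.1 ∧ p.1 < p.2 ∧ p.2 ≤ n

/-- The lexsegment set `L(u,v)`, as a set of sorted index pairs. -/
def lexSegSet (n : ℕ) (u v : ℕ × ℕ) : Set (ℕ × ℕ) :=
  {w | validPair n w ∧ lexGE u w ∧ lexGE w v}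

/-- The lexsegment edge ideal `I = (L(u,v)) ⊆ K[x_1,…,x_n]`. -/
noncomputable def lexSegIdeal (K : Type) [Field K] (n : ℕ) (u v : ℕ × ℕ) :
    Ideal (MvPolynomial (Fin n) K) :=
  Ideal.span ((fun w : ℕ × ℕ => xv K n w.1 * xv K n w.2) '' lexSegSet n u v)

/-- The Alexander dual of the lexsegment edge ideal `(L(u,v))`: the intersection,
over the (minimal) monomial generators `x_p x_q` with `(p,q) ∈ L(u,v)`, of the
prime ideals `(x_p, x_q)`. -/
noncomputable def lexSegAlexDual (K : Type) [Field K] (n : ℕ) (u v : ℕ × ℕ) :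
    Ideal (MvPolynomial (Fin n) K) :=
  ⨅ w ∈ lexSegSet n u v, Ideal.span {xv K n w.1, xv K n w.2}

/-- The arithmetical rank of an ideal: the least `r` such that some `r` elements
of `J` generate an ideal with the same radical as `J`. -/
noncomputable def ara {R : Type} [CommRing R] (J : Ideal R) : ℕ :=
  sInf {r : ℕ | ∃ f : Fin r → R, (∀ t, f t ∈ J) ∧
    (Ideal.span (Set.range f)).radical = J.radical}

/-- The projective dimension of a module `M`: the least `d` admitting a projective
resolution vanishing in homological degrees `> d`. -/
noncomputable def projDim {R : Type} [CommRing R] (M : ModuleCat R) : ℕ :=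
  sInf {d : ℕ | ∃ P : CategoryTheory.ProjectiveResolution M,
    ∀ i : ℕ, d < i → CategoryTheory.Limits.IsZero (P.complex.X i)}

/-- The depth of `S/I` with respect to the graded maximal ideal `(x_1,…,x_n)`:
the longest length of a regular sequence on `S/I` consisting of elements of
`(x_1,…,x_n)`. -/
noncomputable def smDepth (K : Type) [Field K] (n : ℕ)
    (I : Ideal (MvPolynomial (Fin n) K)) : ℕ :=
  sSup {r : ℕ | ∃ rs : List (MvPolynomial (Fin n) K), rs.length = r ∧
    (∀ a ∈ rs, a ∈ Ideal.span
      (Set.range (MvPolynomial.X : Fin n → MvPolynomial (Fin n) K))) ∧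
    RingTheory.Sequence.IsRegular (MvPolynomial (Fin n) K ⧸ I) rs}

/-- The height of an ideal: the infimum of the heights of the primes containing it. -/
noncomputable def idealHeight {R : Type} [CommRing R] (I : Ideal R) : ℕ∞ :=
  ⨅ p ∈ {p : PrimeSpectrum R | I ≤ p.asIdeal}, Order.height p

/-- `m` is a monomial of `K[x_1,…,x_n]`. -/
def IsMonomial {K : Type} [Field K] {n : ℕ} (m : MvPolynomial (Fin n) K) : Prop :=
  ∃ s : Fin n →₀ ℕ, m = MvPolynomial.monomial s 1

/-- `m` is a squarefree monomial of `K[x_1,…,x_n]`. -/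
def IsSqFreeMonomial {K : Type} [Field K] {n : ℕ} (m : MvPolynomial (Fin n) K) : Prop :=
  ∃ t : Finset (Fin n), m = t.prod (fun i => MvPolynomial.X i)

/-- `m` is a minimal monomial generator of the monomial ideal `I`: a monomial of `I`
divisible by no monomial of `I` other than itself. -/
def IsMinimalMonomialGen {K : Type} [Field K] {n : ℕ}
    (I : Ideal (MvPolynomial (Fin n) K)) (m : MvPolynomial (Fin n) K) : Prop :=
  IsMonomial m ∧ m ∈ I ∧
    ∀ m', IsMonomial m' → m' ∈ I → m' ∣ m → m' = m

/-- A chain of primes containing `I` is a chain of primes containing its smallest member, so the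
dimension of `R ⧸ I` is bounded by those of the quotients `R ⧸ P` for primes `P ⊇ I`. -/
theorem ringKrullDim_quotient_le_of_primes {R : Type*} [CommRing R] (I : Ideal R)
    (d : WithBot ℕ∞) (h : ∀ P : Ideal R, P.IsPrime → I ≤ P → ringKrullDim (R ⧸ P) ≤ d) :
    ringKrullDim (R ⧸ I) ≤ d := by
  rw [ringKrullDim_quotient, Order.krullDim]
  refine iSup_le fun l => ?_
  refine le_trans ?_ (h l.head.1.asIdeal l.head.1.isPrime l.head.2)
  rw [ringKrullDim_quotient]
  let l' : LTSeries (PrimeSpectrum.zeroLocus (R := R) l.head.1.asIdeal) :=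
    { length := l.length
      toFun := fun t => ⟨(l t).1, (show l.head ≤ l t from l.head_le t)⟩
      step := fun t => l.step t }
  exact Order.LTSeries.length_le_krullDim l'

theorem ringKrullDim_mvPolynomial_field (K : Type*) [Field K] (σ : Type*) [Finite σ] :
    ringKrullDim (MvPolynomial σ K) = (Nat.card σ : WithBot ℕ∞) := by
  rw [MvPolynomial.ringKrullDim_of_isNoetherianRing, ringKrullDim_eq_zero_of_field, zero_add]

/-- The quotient by `P` is generated by the classes of the variables outside `P`. -/
theorem ringKrullDim_quotient_le_card {K σ : Type*} [Field K] [Finite σ]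
    (P : Ideal (MvPolynomial σ K)) :
    ringKrullDim (MvPolynomial σ K ⧸ P) ≤
      (Nat.card {t : σ // (X t : MvPolynomial σ K) ∉ P} : WithBot ℕ∞) := by
  rw [← ringKrullDim_mvPolynomial_field K]
  let f : MvPolynomial {t : σ // (X t : MvPolynomial σ K) ∉ P} K →ₐ[K] MvPolynomial σ K ⧸ P :=
    aeval fun t => Ideal.Quotient.mk P (X t.1)
  refine ringKrullDim_le_of_surjective f.toRingHom fun y => ?_
  obtain ⟨p, rfl⟩ := Ideal.Quotient.mk_surjective y
  change Ideal.Quotient.mkₐ K P p ∈ f.range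
  induction p using MvPolynomial.induction_on with
  | C a => exact f.range.algebraMap_mem a
  | add p q hp hq => rw [map_add]; exact add_mem hp hq
  | mul_X p t hp =>
    rw [map_mul]
    refine mul_mem hp ?_
    by_cases ht : (X t : MvPolynomial σ K) ∈ P
    · have h0 : Ideal.Quotient.mkₐ K P (X t) = 0 := Ideal.Quotient.eq_zero_iff_mem.2 ht
      rw [h0]
      exact zero_mem _
    · exact ⟨X ⟨t, ht⟩, by simp [f]⟩

/-- An independent set of the graph with edge set `L(x_1 x_i, x_j x_k)` has at most `n - j`
elements. -/
theorem card_le_of_independent {n i j k : ℕ} (hi3 : 3 ≤ i) (hin : i ≤ n) (hj : 2 ≤ j)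
    (hjk : j < k) (hkn : k ≤ n) (hnotfinal : (j, k) ≠ (n - 1, n)) (A : Finset ℕ)
    (hA : ∀ p ∈ A, 1 ≤ p ∧ p ≤ n)
    (hind : ∀ p ∈ A, ∀ q ∈ A, (p, q) ∉ lexSegSet n (1, i) (j, k)) :
    A.card ≤ n - j := by
  have hj2 : j + 2 ≤ n := by
    by_contra hcon
    exact hnotfinal (Prod.ext (by simp only; omega) (by simp only; omega))
  simp only [lexSegSet, validPair, lexGE, Set.mem_ofPred_eq] at hind
  by_cases hp : ∃ p ∈ A, 2 ≤ p ∧ p < j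
  · obtain ⟨p, hpA, hp2, hpj⟩ := hp
    have hsub : A ⊆ {1, p} := by
      intro q hq
      have h1 := hind p hpA q hq
      have h2 := hind q hq p hpA
      have h3 := hA q hq
      have h4 := hA p hpA
      simp only [Finset.mem_insert, Finset.mem_singleton]
      omega
    exact (Finset.card_le_card hsub).trans (Finset.card_le_two.trans (by omega))
  push Not at hp
  by_cases h1 : 1 ∈ A
  · have hn : n ∉ A := fun hn => by
      have := hind 1 h1 n hn
      omega
    -- `{j, j+1}` is an edge, so one of its endpoints, neither of which is `n`, is missing.
    obtain ⟨m, hm, hmj, hmn⟩ : ∃ m, m ∉ A ∧ j ≤ m ∧ m ≤ n - 1 := by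
      by_cases hjA : j ∈ A
      · refine ⟨j + 1, fun h => ?_, by omega, by omega⟩
        have := hind j hjA (j + 1) h
        omega
      · exact ⟨j, hjA, le_rfl, by omega⟩
    have hsub : A ⊆ insert 1 ((Finset.Icc j (n - 1)).erase m) := by
      intro q hq
      have h3 := hA q hq
      have h4 := hp q hq
      have h5 : q ≠ m := fun h => hm (h ▸ hq)
      have h6 : q ≠ n := fun h => hn (h ▸ hq)
      simp only [Finset.mem_insert, Finset.mem_erase, Finset.mem_Icc]
      omega
    refine (Finset.card_le_card hsub).trans ((Finset.card_insert_le _ _).trans ?_)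
    rw [Finset.card_erase_of_mem (Finset.mem_Icc.2 ⟨hmj, hmn⟩), Nat.card_Icc]
    omega
  · obtain ⟨m, hm, hmj, hmn⟩ : ∃ m, m ∉ A ∧ j ≤ m ∧ m ≤ n := by
      by_cases hjA : j ∈ A
      · refine ⟨k, fun h => ?_, by omega, by omega⟩
        have := hind j hjA k h
        omega
      · exact ⟨j, hjA, le_rfl, by omega⟩
    have hsub : A ⊆ (Finset.Icc j n).erase m := by
      intro q hq
      have h3 := hA q hq
      have h4 := hp q hq
      have h5 : q ≠ m := fun h => hm (h ▸ hq)
      have h6 : q ≠ 1 := fun h => h1 (h ▸ hq)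
      simp only [Finset.mem_erase, Finset.mem_Icc]
      omega
    refine (Finset.card_le_card hsub).trans ?_
    rw [Finset.card_erase_of_mem (Finset.mem_Icc.2 ⟨hmj, hmn⟩), Nat.card_Icc]
    omega

/-- Every edge of `L(u, x_j x_k)` has its smaller endpoint among `1, …, j`, so setting
`x_1 = ⋯ = x_j = 0` kills the ideal. -/
theorem le_ringKrullDim_quotient_lexSegIdeal (K : Type) [Field K] (n j k : ℕ) (u : ℕ × ℕ) :
    ((n - j : ℕ) : WithBot ℕ∞) ≤
      ringKrullDim (MvPolynomial (Fin n) K ⧸ lexSegIdeal K n u (j, k)) := by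
  classical
  -- The position `t : Fin n` carries the variable `x_{t+1}`.
  let τ := {t : Fin n // j ≤ t.1}
  have hcard : Nat.card τ = n - j := by
    let e : Fin (n - j) ≃ τ :=
      { toFun := fun s => ⟨⟨s.1 + j, by omega⟩, by simp⟩
        invFun := fun t => ⟨t.1.1 - j, by have := t.1.2; have := t.2; omega⟩
        left_inv := fun s => by simp
        right_inv := fun t => by
          have := t.2
          apply Subtype.ext
          apply Fin.ext
          simp only
          omega }
    rw [← Nat.card_congr e, Nat.card_fin]
  rw [← hcard, ← ringKrullDim_mvPolynomial_field K]
  let f : MvPolynomial (Fin n) K →ₐ[K] MvPolynomial τ K :=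
    aeval fun t => if h : j ≤ t.1 then X ⟨t, h⟩ else 0
  have hf : ∀ a ∈ lexSegIdeal K n u (j, k), f.toRingHom a = 0 := by
    suffices h : lexSegIdeal K n u (j, k) ≤ RingHom.ker f.toRingHom from
      fun a ha => h ha
    refine Ideal.span_le.2 ?_
    rintro _ ⟨⟨p, q⟩, hw, rfl⟩
    simp only [lexSegSet, validPair, lexGE, Set.mem_ofPred_eq] at hw
    have hp : p - 1 < n := by omega
    have hpj : ¬ j ≤ p - 1 := by omega
    change f _ = 0
    rw [map_mul]
    have h0 : f (xv K n p) = 0 := by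
      simp [xv, hp, f, hpj]
    simp only [h0, zero_mul]
  refine ringKrullDim_le_of_surjective (Ideal.Quotient.lift _ f.toRingHom hf) ?_
  refine Ideal.Quotient.lift_surjective_of_surjective _ hf fun y => ?_
  change y ∈ f.range
  induction y using MvPolynomial.induction_on with
  | C a => exact f.range.algebraMap_mem a
  | add p q hp hq => exact add_mem hp hq
  | mul_X p t hp =>
    refine mul_mem hp ⟨X t.1, ?_⟩
    have := t.2
    simp [f, this]

/-- A lexsegment edge ideal `I = (L(x_1 x_i, x_j x_k))` which is
neither initial (`i ≥ 3`) nor final (`(j,k) ≠ (n-1,n)`), with `2 ≤ j < k ≤ n`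
and `u >_lex v`, satisfies `dim(S/I) = n - j`. -/
theorem lexSegIdeal_dim (K : Type) [Field K] (n i j k : ℕ)
    (hi3 : 3 ≤ i) (hin : i ≤ n) (hj : 2 ≤ j) (hjk : j < k) (hkn : k ≤ n)
    (hnotfinal : (j, k) ≠ (n - 1, n)) (huv : lexGT (1, i) (j, k)) :
    ringKrullDim (MvPolynomial (Fin n) K ⧸ lexSegIdeal K n (1, i) (j, k))
      = ((n - j : ℕ) : WithBot (WithTop ℕ)) := by
  classical
  refine le_antisymm ?_ (le_ringKrullDim_quotient_lexSegIdeal K n j k (1, i))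
  refine ringKrullDim_quotient_le_of_primes _ _ fun P hP hIP => ?_
  refine (ringKrullDim_quotient_le_card P).trans ?_
  -- The 1-based indices of the variables outside `P`.
  let A : Finset ℕ := (Finset.univ.filter
    fun t : Fin n => (X t : MvPolynomial (Fin n) K) ∉ P).image fun t => t.1 + 1
  have hAcard : A.card = Nat.card {t : Fin n // (X t : MvPolynomial (Fin n) K) ∉ P} := by
    rw [Finset.card_image_of_injective _ fun a b h => Fin.ext (by simpa using h),
      Nat.card_eq_fintype_card, Fintype.card_subtype]
  have hmem : ∀ p ∈ A, 1 ≤ p ∧ p ≤ n ∧ xv K n p ∉ P := by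
    intro p hp
    obtain ⟨t, ht, rfl⟩ := Finset.mem_image.1 hp
    have := t.2
    refine ⟨by omega, by omega, ?_⟩
    simpa [xv] using ht
  rw [← hAcard]
  refine Nat.cast_le.2 ?_
  refine card_le_of_independent hi3 hin hj hjk hkn hnotfinal A
    (fun p hp => ⟨(hmem p hp).1, (hmem p hp).2.1⟩) fun p hp q hq hpq => ?_
  have hprod : xv K n p * xv K n q ∈ P := hIP (Ideal.subset_span ⟨(p, q), hpq, rfl⟩)
  exact (hP.mem_or_mem hprod).elim (hmem p hp).2.2 (hmem q hq).2.2
end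

section
/- Let I = (L(u,v)) ⊂ S = K[x_1,…,x_n] be a lexsegment edge ideal determined by u = x_1 x_i with 3 ≤ i ≤ n and v = x_j x_k with 2 ≤ j < k ≤ n, where u >_lex v. Then projdim_S(S/I) = n − 1 if and only if x_{i-1}x_n ≥_lex v. -/
/-!
The ideal `I` is the edge ideal of a graph `G` on `n` vertices, and the theorem is a case of a
general dichotomy: `S/I(G)` has projective dimension at most `n - 1`, with equality exactly when
the complement of `G` is disconnected.

*Upper bounds.* The ideals `I(G) + (x_t : t ∈ T)` (`edgeIdeal K G T`) form a family closed under
adding a variable `x_v` (which replaces `T` by `T ∪ {v}`) and under the colon by a variable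
`x_v` with `v ∉ T` (which replaces `T` by `T ∪ N(v)`). The exact sequence
`0 → S/(J : x) → S/J → S/(J, x) → 0` bounds the projective dimension of `S/J` by those of the
outer terms, and an induction on the number of vertices outside `T` ends with ideals generated by
variables only. A set of vertices isolated in `G - T` lowers the bound by its size
(`pdLE_of_isolated`), and by one more when `G - T` has a further vertex
(`pdLE_of_isolated_of_exists`). If the complement of `G` is connected, its vertices can be listed
so that each one after the first is a non-neighbour in `G` of an earlier one (`CoBuild`); removing
the last vertex `v` with the exact sequence above leaves a non-neighbour of `v` in the
colon term, which brings the bound down to `n - 2` (`pdLE_of_coBuild`).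

*Lower bound.* If all edges between a vertex set `A` and its complement are present, then
`I(G)` is the intersection of `I(G) + (x_a : a ∈ A)` and `I(G) + (x_b : b ∉ A)`, whose sum is the
maximal ideal `𝔪`. In `0 → S/I → S/I₁ × S/I₂ → K → 0` the middle term has projective dimension
at most `n - 1`, while `K` has projective dimension `n` because `Ext^n(K, K) ≠ 0`; so
`S/I` cannot have projective dimension `n - 2` or less (`not_pdLE_of_join`).

*The lexsegment graph.* When `x_{i-1} x_n ≥ v`, every vertex of `{1, …, i-1}` is joined to every
vertex of `{i, …, n}`. Otherwise `{1, i-1}` and `{i-1, n}` are non-edges and every other vertex is a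
non-neighbour of `1` or of `n`, so the complement is connected.

The projective dimension defined by lengths of projective resolutions is compared with
`HasProjectiveDimensionLE`, defined by vanishing of `Ext`, in `projDim_eq_succ_iff`: a resolution is
built by dimension shifting, splicing one projective at a time.
-/

open MvPolynomial

/-! ### Projective dimension through resolutions and through `Ext` -/

section Homological
open CategoryTheory CategoryTheory.Limits CategoryTheory.Abelian

/-- The augmentation `P₀ ⟶ M` of a projective resolution, typed with target `M` itself rather than
the degree-`0` term of the single complex on `M`. -/
noncomputable def resAug {R : Type} [CommRing R] {M : ModuleCat.{0} R}
    (Q : ProjectiveResolution M) : Q.complex.X 0 ⟶ M := Q.π.f 0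

theorem d_comp_resAug {R : Type} [CommRing R] {M : ModuleCat.{0} R}
    (Q : ProjectiveResolution M) : Q.complex.d 1 0 ≫ resAug Q = 0 :=
  Q.complex_d_comp_π_f_zero

theorem epi_resAug {R : Type} [CommRing R] {M : ModuleCat.{0} R}
    (Q : ProjectiveResolution M) : Epi (resAug Q) :=
  inferInstanceAs (Epi (Q.π.f 0))

theorem exact_resAug {R : Type} [CommRing R] {M : ModuleCat.{0} R}
    (Q : ProjectiveResolution M) : (ShortComplex.mk _ _ (d_comp_resAug Q)).Exact :=
  Q.exact₀

theorem resAug_comp_comp {R : Type} [CommRing R] {S : ShortComplex (ModuleCat.{0} R)}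
    (Q : ProjectiveResolution S.X₁) : (resAug Q ≫ S.f) ≫ S.g = 0 := by
  rw [Category.assoc, S.zero, comp_zero]

theorem d_comp_resAug_comp {R : Type} [CommRing R] {S : ShortComplex (ModuleCat.{0} R)}
    (Q : ProjectiveResolution S.X₁) : Q.complex.d 1 0 ≫ resAug Q ≫ S.f = 0 := by
  rw [← Category.assoc, d_comp_resAug, zero_comp]

/-- For `0 → S.X₁ → S.X₂ → S.X₃ → 0` exact with `S.X₂` projective, the resolution
`⋯ → Q₁ → Q₀ → S.X₂` of `S.X₃` obtained from a projective resolution `Q` of `S.X₁`. -/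
noncomputable def spliceRes {R : Type} [CommRing R] {S : ShortComplex (ModuleCat R)}
    (hS : S.ShortExact) [Projective S.X₂] (Q : ProjectiveResolution S.X₁) :
    ProjectiveResolution S.X₃ where
  complex := Q.complex.augment (resAug Q ≫ S.f) (d_comp_resAug_comp Q)
  projective n := by
    rcases n with _ | n
    · exact ‹Projective S.X₂›
    · exact Q.projective n
  π := (ChainComplex.toSingle₀Equiv _ _).symm ⟨S.g, resAug_comp_comp Q⟩
  quasiIso := ⟨fun n => by
    have hm := hS.mono_f
    have he := hS.epi_g
    cases n
    · rw [ChainComplex.quasiIsoAt₀_iff, ShortComplex.quasiIso_iff_of_zeros']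
      · dsimp
        let T : ShortComplex (ModuleCat R) := ShortComplex.mk (resAug Q ≫ S.f) S.g
          (resAug_comp_comp Q)
        have hT : T.Exact := by
          let α : T ⟶ S :=
            { τ₁ := resAug Q
              τ₂ := 𝟙 _
              τ₃ := 𝟙 _
              comm₁₂ := by simp [T]
              comm₂₃ := by simp [T] }
          have h1 : Epi α.τ₁ := epi_resAug Q
          have h2 : IsIso α.τ₂ := inferInstanceAs (IsIso (𝟙 S.X₂))
          have h3 : Mono α.τ₃ := inferInstanceAs (Mono (𝟙 S.X₃))
          rw [ShortComplex.exact_iff_of_epi_of_isIso_of_mono α]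
          exact hS.exact
        refine (ShortComplex.exact_and_epi_g_iff_of_iso (S₂ := T) ?_).2 ⟨hT, he⟩
        exact ShortComplex.isoMk (Iso.refl _) (Iso.refl _) (Iso.refl _)
          ((Category.id_comp _).trans (Category.comp_id _).symm)
          ((Category.id_comp _).trans (Category.comp_id _).symm)
      all_goals rfl
    · rename_i n
      rw [quasiIsoAt_iff_exactAt']
      · rw [HomologicalComplex.exactAt_iff' _ (n + 1 + 1) (n + 1) n (by simp) (by simp)]
        cases n with
        | zero =>
          let T : ShortComplex (ModuleCat R) := ShortComplex.mk (Q.complex.d 1 0) (resAug Q ≫ S.f)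
            (d_comp_resAug_comp Q)
          change T.Exact
          let α : ShortComplex.mk _ _ (d_comp_resAug Q) ⟶ T :=
            { τ₁ := 𝟙 _
              τ₂ := 𝟙 _
              τ₃ := S.f
              comm₁₂ := by simp [T]
              comm₂₃ := by simp [T] }
          have h1 : Epi α.τ₁ := inferInstanceAs (Epi (𝟙 (Q.complex.X 1)))
          have h2 : IsIso α.τ₂ := inferInstanceAs (IsIso (𝟙 (Q.complex.X 0)))
          have h3 : Mono α.τ₃ := inferInstanceAs (Mono S.f)
          rw [← ShortComplex.exact_iff_of_epi_of_isIso_of_mono α]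
          exact exact_resAug Q
        | succ m => exact Q.exact_succ m
      · apply ChainComplex.exactAt_succ_single_obj⟩

/-- Induction on `d`: the kernel of a surjection from a projective onto `M` has projective
dimension one less. -/
theorem exists_res_of_pd {R : Type} [CommRing R] (d : ℕ) (M : ModuleCat.{0} R)
    (h : HasProjectiveDimensionLE M d) :
    ∃ P : ProjectiveResolution M, ∀ i : ℕ, d < i → IsZero (P.complex.X i) := by
  induction d generalizing M with
  | zero =>
    have := (projective_iff_hasProjectiveDimensionLE_zero M).2 h
    refine ⟨ProjectiveResolution.self M, fun i hi => ?_⟩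
    apply HomologicalComplex.isZero_single_obj_X
    omega
  | succ d ih =>
    let p := Projective.π M
    have hS : (ShortComplex.mk (kernel.ι p) p (kernel.condition p)).ShortExact :=
      { exact := ShortComplex.exact_kernel p }
    have hK : HasProjectiveDimensionLE (kernel p) d :=
      (hS.hasProjectiveDimensionLT_X₃_iff d (inferInstanceAs (Projective (Projective.over M)))).1 h
    obtain ⟨Q, hQ⟩ := ih _ hK
    have : Projective (ShortComplex.mk (kernel.ι p) p (kernel.condition p)).X₂ :=
      inferInstanceAs (Projective (Projective.over M))
    refine ⟨spliceRes hS Q, fun i hi => ?_⟩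
    obtain ⟨i, rfl⟩ : ∃ k, i = k + 1 := ⟨i - 1, by omega⟩
    exact hQ i (by omega)

/-- Classes in `Ext^i(M, Y)` are represented by maps out of the `i`-th term of a resolution. -/
theorem pd_of_res {R : Type} [CommRing R] (d : ℕ) (M : ModuleCat.{0} R)
    (P : ProjectiveResolution M) (hP : ∀ i : ℕ, d < i → IsZero (P.complex.X i)) :
    HasProjectiveDimensionLE M d := by
  refine (hasProjectiveDimensionLT_iff.{0} M (d + 1)).2 fun i hi Y e => ?_
  obtain ⟨f, hf, rfl⟩ := P.extMk_surjective e (i + 1) rfl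
  obtain rfl : f = 0 := (hP i (by omega)).eq_of_src _ _
  exact P.extMk_zero _ _

/-- The hypothesis `h` also guarantees that the infimum defining `projDim M` is over a nonempty set,
so that it is not the junk value `0`. -/
theorem projDim_eq_succ_iff {R : Type} [CommRing R] (d : ℕ) (M : ModuleCat.{0} R)
    (h : HasProjectiveDimensionLE M (d + 1)) :
    projDim M = d + 1 ↔ ¬ HasProjectiveDimensionLE M d := by
  have hset : {d : ℕ | ∃ P : ProjectiveResolution M, ∀ i : ℕ, d < i → IsZero (P.complex.X i)} =
      {d | HasProjectiveDimensionLE M d} := by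
    ext d
    exact ⟨fun ⟨P, hP⟩ => pd_of_res d M P hP, exists_res_of_pd d M⟩
  rw [projDim, hset]
  constructor
  · intro he hd
    have := Nat.sInf_le (s := {d | HasProjectiveDimensionLE M d}) hd
    omega
  · intro hd
    refine le_antisymm (Nat.sInf_le h) ?_
    refine le_csInf ⟨_, h⟩ fun e he => ?_
    by_contra hlt
    have he' : HasProjectiveDimensionLT M (e + 1) := he
    exact hd (hasProjectiveDimensionLT_of_ge M (e + 1) (d + 1) (by omega))
end Homological

/-! ### Projective dimension of cyclic modules along exact sequences -/

section Algebra
open CategoryTheory CategoryTheory.Limits CategoryTheory.Abelian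

/-- The cyclic module `R ⧸ I` has projective dimension at most `d`. -/
def pdLE {R : Type} [CommRing R] (I : Ideal R) (d : ℕ) : Prop :=
  HasProjectiveDimensionLT (ModuleCat.of R (R ⧸ I)) (d + 1)

theorem pdLE.mono {R : Type} [CommRing R] {I : Ideal R} {d e : ℕ} (h : pdLE I d) (hde : d ≤ e) :
    pdLE I e := by
  have h' : HasProjectiveDimensionLT (ModuleCat.of R (R ⧸ I)) (d + 1) := h
  exact hasProjectiveDimensionLT_of_ge _ (d + 1) (e + 1) (by omega)

theorem pdLE_bot {R : Type} [CommRing R] : pdLE (⊥ : Ideal R) 0 := by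
  have : Module.Free R (R ⧸ (⊥ : Ideal R)) :=
    Module.Free.of_equiv (Submodule.quotEquivOfEqBot (⊥ : Ideal R) rfl).symm
  have : Projective (ModuleCat.of R (R ⧸ (⊥ : Ideal R))) := ModuleCat.projective_of_free
     (Module.Free.chooseBasis R (R ⧸ (⊥ : Ideal R)))
  exact inferInstanceAs (HasProjectiveDimensionLT (ModuleCat.of R (R ⧸ (⊥ : Ideal R))) 1)

/-- The sequence `R/J → R/I → R/(I, x)`, with first map multiplication by `x`, where `J = (I : x)`.
The colon ideal enters only through its membership criterion `h`. -/
noncomputable def colonComplex {R : Type} [CommRing R] (I J : Ideal R) (x : R)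
    (h : ∀ p, p * x ∈ I ↔ p ∈ J) : ShortComplex (ModuleCat R) :=
  ShortComplex.mk
    (ModuleCat.ofHom (Submodule.mapQ J I (LinearMap.mulRight R x) fun p hp => (h p).2 hp))
    (ModuleCat.ofHom (Submodule.mapQ I (I ⊔ Ideal.span {x}) LinearMap.id fun _ hp =>
      Ideal.mem_sup_left hp))
    (by
      ext
      refine (Submodule.Quotient.mk_eq_zero _).2 ?_
      exact Ideal.mem_sup_right (Ideal.mul_mem_left _ _ (Ideal.mem_span_singleton_self x)))

theorem colonComplex_shortExact {R : Type} [CommRing R] (I J : Ideal R) (x : R)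
    (h : ∀ p, p * x ∈ I ↔ p ∈ J) : (colonComplex I J x h).ShortExact := by
  refine ModuleCat.shortComplex_shortExact _ ?_ ?_ ?_
  · intro y
    obtain ⟨y, rfl⟩ := Submodule.Quotient.mk_surjective _ y
    constructor
    · intro hy
      have hy' : y ∈ I ⊔ Ideal.span {x} := (Submodule.Quotient.mk_eq_zero _).1 hy
      obtain ⟨a, ha, b, hb, rfl⟩ := Submodule.mem_sup.1 hy'
      obtain ⟨c, rfl⟩ := Ideal.mem_span_singleton'.1 hb
      refine ⟨Submodule.Quotient.mk c, ?_⟩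
      refine (Submodule.Quotient.eq I).2 ?_
      change c * x - (a + c * x) ∈ I
      simpa using ha
    · rintro ⟨z, hz⟩
      rw [← hz]
      obtain ⟨z, rfl⟩ := Submodule.Quotient.mk_surjective _ z
      refine (Submodule.Quotient.mk_eq_zero _).2 ?_
      exact Ideal.mem_sup_right (Ideal.mul_mem_left _ _ (Ideal.mem_span_singleton_self x))
  · refine (injective_iff_map_eq_zero (colonComplex I J x h).f.hom).2 fun y hy => ?_
    obtain ⟨y, rfl⟩ := Submodule.Quotient.mk_surjective _ y
    refine (Submodule.Quotient.mk_eq_zero _).2 ((h y).1 ?_)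
    exact (Submodule.Quotient.mk_eq_zero I).1 hy
  · intro y
    obtain ⟨y, rfl⟩ := Submodule.Quotient.mk_surjective _ y
    exact ⟨Submodule.Quotient.mk y, rfl⟩

/-- The middle term of `0 → R/(I : x) → R/I → R/(I, x) → 0`. -/
theorem pdLE_of_colon {R : Type} [CommRing R] {I J : Ideal R} {x : R} {d : ℕ}
    (h : ∀ p, p * x ∈ I ↔ p ∈ J) (h₁ : pdLE J d) (h₂ : pdLE (I ⊔ Ideal.span {x}) d) :
    pdLE I d :=
  (colonComplex_shortExact I J x h).hasProjectiveDimensionLT_X₂ _ h₁ h₂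

/-- The hypothesis `h` says that `x` is a nonzerodivisor on `R/I`, that is `(I : x) = I`. -/
theorem pdLE_sup_of_regular {R : Type} [CommRing R] {I : Ideal R} {x : R} {d : ℕ}
    (h : ∀ p, p * x ∈ I ↔ p ∈ I) (h₁ : pdLE I d) : pdLE (I ⊔ Ideal.span {x}) (d + 1) :=
  (colonComplex_shortExact I I x h).hasProjectiveDimensionLT_X₃ _ h₁ (h₁.mono d.le_succ)

/-- Multiplication by `x` on `M` induces zero on `Ext(M, N)` when `x` kills `N`, since it agrees
with the map induced by multiplication by `x` on `N`. -/
theorem mk₀_smul_id_comp_eq_zero {R : Type} [CommRing R] (M N : ModuleCat.{0} R) (x : R)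
    (hN : ∀ y : N, x • y = 0) {d : ℕ} (e : Ext M N d) :
    (Ext.mk₀ (x • 𝟙 M)).comp e (zero_add d) = 0 := by
  have hx : x • 𝟙 N = 0 := by
    ext y
    exact hN y
  have h2 := Ext.comp_smul e (Ext.mk₀ (𝟙 N)) (add_zero d) x
  rw [← Ext.mk₀_smul, hx, Ext.mk₀_zero, Ext.comp_zero, Ext.comp_mk₀_id] at h2
  rw [Ext.mk₀_smul, Ext.smul_comp, Ext.mk₀_id_comp, ← h2]

/-- For `x` regular on `R/I` and killing `N`, the connecting map
`Ext^d(R/I, N) → Ext^(d+1)(R/(I, x), N)` is injective: its kernel is the image of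
multiplication by `x`, which is zero. -/
theorem ext_ne_zero_of_regular {R : Type} [CommRing R] {I : Ideal R} {x : R} {d : ℕ}
    (h : ∀ p, p * x ∈ I ↔ p ∈ I) (N : ModuleCat.{0} R) (hN : ∀ y : N, x • y = 0)
    (h₁ : ∃ e : Ext (ModuleCat.of R (R ⧸ I)) N d, e ≠ 0) :
    ∃ e : Ext (ModuleCat.of R (R ⧸ (I ⊔ Ideal.span {x}))) N (d + 1), e ≠ 0 := by
  obtain ⟨e, he⟩ := h₁
  have hS := colonComplex_shortExact I I x h
  refine ⟨hS.extClass.comp (b := d) e (add_comm 1 d), fun h0 => he ?_⟩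
  obtain ⟨e', rfl⟩ := Ext.contravariant_sequence_exact₁ hS (Y := N) (n₀ := d) e (add_comm 1 d) h0
  have hf : (colonComplex I I x h).f = x • 𝟙 (ModuleCat.of R (R ⧸ I)) := by
    refine ModuleCat.hom_ext (LinearMap.ext fun y => ?_)
    obtain ⟨y, rfl⟩ := Submodule.Quotient.mk_surjective _ y
    exact congrArg (Submodule.Quotient.mk (p := I)) (mul_comm y x)
  exact (congrArg (fun f => (Ext.mk₀ f).comp e' (zero_add d)) hf).trans
    (mk₀_smul_id_comp_eq_zero _ _ x hN e')

/-- The sequence `R/I → R/I₁ × R/I₂ → R/(I₁ + I₂)`, with second map the difference; it is short exact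
when `I = I₁ ∩ I₂`. -/
noncomputable def interComplex {R : Type} [CommRing R] (I I₁ I₂ : Ideal R)
    (h₁ : I ≤ I₁) (h₂ : I ≤ I₂) : ShortComplex (ModuleCat R) :=
  ShortComplex.mk
    (X₁ := ModuleCat.of R (R ⧸ I)) (X₂ := ModuleCat.of R ((R ⧸ I₁) × (R ⧸ I₂)))
    (X₃ := ModuleCat.of R (R ⧸ (I₁ ⊔ I₂)))
    (ModuleCat.ofHom (LinearMap.prod (Submodule.mapQ I I₁ LinearMap.id h₁)
      (Submodule.mapQ I I₂ LinearMap.id h₂)))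
    (ModuleCat.ofHom (LinearMap.coprod
      (Submodule.mapQ I₁ (I₁ ⊔ I₂) LinearMap.id fun _ hp => Ideal.mem_sup_left hp)
      (- Submodule.mapQ I₂ (I₁ ⊔ I₂) LinearMap.id fun _ hp => Ideal.mem_sup_right hp)))
    (by
      ext
      exact add_neg_cancel (Submodule.Quotient.mk (p := I₁ ⊔ I₂) 1))

theorem interComplex_shortExact {R : Type} [CommRing R] (I I₁ I₂ : Ideal R)
    (h₁ : I ≤ I₁) (h₂ : I ≤ I₂) (h : I₁ ⊓ I₂ ≤ I) : (interComplex I I₁ I₂ h₁ h₂).ShortExact := by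
  refine ModuleCat.shortComplex_shortExact _ ?_ ?_ ?_
  · rintro ⟨y, z⟩
    obtain ⟨y, rfl⟩ := Submodule.Quotient.mk_surjective _ y
    obtain ⟨z, rfl⟩ := Submodule.Quotient.mk_surjective _ z
    constructor
    · intro hy
      have hy' : Submodule.Quotient.mk (p := I₁ ⊔ I₂) y + -Submodule.Quotient.mk z = 0 := hy
      rw [← sub_eq_add_neg, sub_eq_zero, Submodule.Quotient.eq] at hy'
      obtain ⟨a, ha, b, hb, hab⟩ := Submodule.mem_sup.1 hy'
      refine ⟨Submodule.Quotient.mk (y - a), Prod.ext ?_ ?_⟩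
      · refine (Submodule.Quotient.eq I₁).2 ?_
        change (y - a) - y ∈ I₁
        simpa using ha
      · refine (Submodule.Quotient.eq I₂).2 ?_
        change (y - a) - z ∈ I₂
        have : y - a - z = b := by linear_combination -hab
        rwa [this]
    · rintro ⟨w, hw⟩
      rw [← hw]
      obtain ⟨w, rfl⟩ := Submodule.Quotient.mk_surjective _ w
      exact add_neg_cancel (Submodule.Quotient.mk (p := I₁ ⊔ I₂) w)
  · refine (injective_iff_map_eq_zero (interComplex I I₁ I₂ h₁ h₂).f.hom).2 fun y hy => ?_
    obtain ⟨y, rfl⟩ := Submodule.Quotient.mk_surjective _ y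
    refine (Submodule.Quotient.mk_eq_zero _).2 (h ⟨?_, ?_⟩)
    · exact (Submodule.Quotient.mk_eq_zero I₁).1 (congrArg Prod.fst hy)
    · exact (Submodule.Quotient.mk_eq_zero I₂).1 (congrArg Prod.snd hy)
  · intro y
    obtain ⟨y, rfl⟩ := Submodule.Quotient.mk_surjective _ y
    refine ⟨(Submodule.Quotient.mk y, 0), ?_⟩
    change Submodule.Quotient.mk (p := I₁ ⊔ I₂) y + -(Submodule.Quotient.mk 0) = _
    simp

/-- The last term of `0 → R/(I₁ ∩ I₂) → R/I₁ × R/I₂ → R/(I₁ + I₂) → 0`. -/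
theorem pdLE_sup_of_inf {R : Type} [CommRing R] {I I₁ I₂ : Ideal R} {d : ℕ}
    (h₁ : I ≤ I₁) (h₂ : I ≤ I₂) (h : I₁ ⊓ I₂ ≤ I)
    (hI : pdLE I d) (hI₁ : pdLE I₁ (d + 1)) (hI₂ : pdLE I₂ (d + 1)) : pdLE (I₁ ⊔ I₂) (d + 1) := by
  refine (interComplex_shortExact I I₁ I₂ h₁ h₂ h).hasProjectiveDimensionLT_X₃ _ hI ?_
  have a₁ : HasProjectiveDimensionLT (ModuleCat.of R (R ⧸ I₁)) (d + 1 + 1) := hI₁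
  have a₂ : HasProjectiveDimensionLT (ModuleCat.of R (R ⧸ I₂)) (d + 1 + 1) := hI₂
  exact hasProjectiveDimensionLT_of_iso (ModuleCat.biprodIsoProd (ModuleCat.of R (R ⧸ I₁)) (ModuleCat.of R (R ⧸ I₂))) _
end Algebra

/-! ### Edge ideals together with a set of variables -/

section Graph
open CategoryTheory CategoryTheory.Abelian
open scoped Classical

variable {n : ℕ}

/-- Exponents of the monomials `x_t` for `t ∈ T` and `x_a x_b` for the edges `ab` of `G`. -/
def genExps (G : SimpleGraph (Fin n)) (T : Finset (Fin n)) : Set (Fin n →₀ ℕ) :=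
  {s | (∃ t ∈ T, s = Finsupp.single t 1) ∨
    ∃ a b, G.Adj a b ∧ s = Finsupp.single a 1 + Finsupp.single b 1}

/-- The ideal `I(G) + (x_t : t ∈ T)`. For `G = ⊥` it is generated by the variables in `T`, for `T = ∅`
it is the edge ideal of `G`. -/
noncomputable def edgeIdeal (K : Type) [Field K] (G : SimpleGraph (Fin n)) (T : Finset (Fin n)) :
    Ideal (MvPolynomial (Fin n) K) :=
  Ideal.span ((fun s => monomial s (1 : K)) '' genExps G T)

variable {K : Type} [Field K]

/-- Membership in the monomial ideal is a condition on the support of each monomial: it meets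
`T` or contains an edge. -/
theorem mem_edgeIdeal {G : SimpleGraph (Fin n)} {T : Finset (Fin n)}
    {p : MvPolynomial (Fin n) K} : p ∈ edgeIdeal K G T ↔ ∀ m ∈ p.support,
      (∃ t ∈ T, m t ≠ 0) ∨ ∃ a b, G.Adj a b ∧ m a ≠ 0 ∧ m b ≠ 0 := by
  rw [edgeIdeal, mem_ideal_span_monomial_image]
  refine forall₂_congr fun m _ => ?_
  have hs : ∀ (t : Fin n) (f : Fin n →₀ ℕ), Finsupp.single t 1 ≤ f ↔ f t ≠ 0 := fun t f => by
    rw [Finsupp.single_le_iff, Nat.one_le_iff_ne_zero]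
  constructor
  · rintro ⟨s, ⟨t, ht, rfl⟩ | ⟨a, b, hab, rfl⟩, hsm⟩
    · exact Or.inl ⟨t, ht, (hs t m).1 hsm⟩
    · exact Or.inr ⟨a, b, hab, (hs a m).1 (le_self_add.trans hsm),
        (hs b m).1 (le_add_self.trans hsm)⟩
  · rintro (⟨t, ht, hm⟩ | ⟨a, b, hab, ha, hb⟩)
    · exact ⟨_, Or.inl ⟨t, ht, rfl⟩, (hs t m).2 hm⟩
    · refine ⟨_, Or.inr ⟨a, b, hab, rfl⟩, fun c => ?_⟩
      have hne := hab.ne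
      simp only [Finsupp.add_apply, Finsupp.single_apply]
      split_ifs with h1 h2 h2
      · exact absurd (h1.trans h2.symm) hne
      · subst h1; omega
      · subst h2; omega
      · omega

/-- Edges meeting `T` are redundant generators. -/
theorem edgeIdeal_eq_bot_graph {G : SimpleGraph (Fin n)} {T : Finset (Fin n)}
    (h : ∀ a b, G.Adj a b → a ∈ T ∨ b ∈ T) : edgeIdeal K G T = edgeIdeal K ⊥ T := by
  ext p
  rw [mem_edgeIdeal, mem_edgeIdeal]
  refine forall₂_congr fun m _ => ?_
  constructor
  · rintro (h1 | ⟨a, b, hab, ha, hb⟩)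
    · exact Or.inl h1
    · rcases h a b hab with h1 | h1
      · exact Or.inl ⟨a, h1, ha⟩
      · exact Or.inl ⟨b, h1, hb⟩
  · rintro (h1 | ⟨a, b, hab, -⟩)
    · exact Or.inl h1
    · exact absurd hab (by simp)

theorem edgeIdeal_sup (G : SimpleGraph (Fin n)) (T T' : Finset (Fin n)) :
    edgeIdeal K G T ⊔ edgeIdeal K G T' = edgeIdeal K G (T ∪ T') := by
  rw [edgeIdeal, edgeIdeal, edgeIdeal, ← Ideal.span_union, ← Set.image_union]
  congr 2
  ext s
  simp only [genExps, Set.mem_union, Set.mem_ofPred_eq, Finset.mem_union, or_and_right, exists_or]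
  exact or_or_distrib_right.symm

theorem edgeIdeal_sup_X (G : SimpleGraph (Fin n)) (T : Finset (Fin n)) (v : Fin n) :
    edgeIdeal K G T ⊔ Ideal.span {X v} = edgeIdeal K G (insert v T) := by
  have : ({X v} : Set (MvPolynomial (Fin n) K)) =
      (fun s => monomial s (1 : K)) '' {Finsupp.single v 1} := by simp [X]
  rw [edgeIdeal, edgeIdeal, this, ← Ideal.span_union, ← Set.image_union]
  congr 2
  ext s
  simp only [genExps, Set.mem_union, Set.mem_ofPred_eq, Finset.mem_insert, Set.mem_singleton_iff,
    or_and_right, exists_or, exists_eq_left]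
  exact or_right_comm.trans (or_congr_left or_comm)

/-- The colon ideal `(I(G) + (x_t : t ∈ T)) : x_v` is obtained by adding the neighbours of `v`
to `T`. -/
theorem edgeIdeal_colon_X (G : SimpleGraph (Fin n)) {T : Finset (Fin n)} {v : Fin n} (hv : v ∉ T)
    (p : MvPolynomial (Fin n) K) :
    p * X v ∈ edgeIdeal K G T ↔ p ∈ edgeIdeal K G (T ∪ Finset.univ.filter (G.Adj v)) := by
  rw [mem_edgeIdeal, mem_edgeIdeal, support_mul_X]
  simp only [Finset.mem_map, addRightEmbedding_apply, forall_exists_index, and_imp,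
    forall_apply_eq_imp_iff₂]
  refine forall₂_congr fun m _ => ?_
  have hne : ∀ t, t ≠ v → (m + Finsupp.single v 1 : Fin n →₀ ℕ) t = m t := fun t ht => by
    simp [Ne.symm ht]
  have hle : ∀ t, m t ≠ 0 → (m + Finsupp.single v 1 : Fin n →₀ ℕ) t ≠ 0 := fun t ht => by
    simp [ht]
  have hvv : (m + Finsupp.single v 1 : Fin n →₀ ℕ) v ≠ 0 := by simp
  constructor
  · rintro (⟨t, ht, h⟩ | ⟨a, b, hab, ha, hb⟩)
    · exact Or.inl ⟨t, by simp [ht], by rwa [hne t (by rintro rfl; exact hv ht)] at h⟩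
    · by_cases hav : a = v
      · subst hav
        exact Or.inl ⟨b, by simp [hab], by rwa [hne b hab.ne'] at hb⟩
      by_cases hbv : b = v
      · subst hbv
        exact Or.inl ⟨a, by simp [hab.symm], by rwa [hne a hab.ne] at ha⟩
      rw [hne a hav] at ha
      rw [hne b hbv] at hb
      exact Or.inr ⟨a, b, hab, ha, hb⟩
  · rintro (⟨t, ht, h⟩ | ⟨a, b, hab, ha, hb⟩)
    · rcases Finset.mem_union.1 ht with ht | ht
      · exact Or.inl ⟨t, ht, hle t h⟩
      · exact Or.inr ⟨v, t, by simpa using ht, hvv, hle t h⟩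
    · exact Or.inr ⟨a, b, hab, hle a ha, hle b hb⟩

theorem edgeIdeal_bot_regular {T : Finset (Fin n)} {v : Fin n} (hv : v ∉ T)
    (p : MvPolynomial (Fin n) K) :
    p * X v ∈ edgeIdeal K ⊥ T ↔ p ∈ edgeIdeal K ⊥ T := by
  rw [edgeIdeal_colon_X _ hv]
  simp

theorem edgeIdeal_bot_empty : edgeIdeal K (⊥ : SimpleGraph (Fin n)) ∅ = ⊥ := by
  simp [edgeIdeal, genExps]

theorem pdLE_edgeIdeal_bot (T : Finset (Fin n)) : pdLE (edgeIdeal K ⊥ T) T.card := by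
  induction T using Finset.induction_on with
  | empty => rw [edgeIdeal_bot_empty]; exact pdLE_bot
  | insert v T hv ih =>
    rw [Finset.card_insert_of_notMem hv, ← edgeIdeal_sup_X]
    exact pdLE_sup_of_regular (edgeIdeal_bot_regular hv) ih

/-- `Ext^|T|(S/(x_t : t ∈ T), K)` is nonzero, where `K` is `S` modulo all variables; the variables
form a regular sequence killing `K`. -/
theorem ext_edgeIdeal_bot_ne_zero (T : Finset (Fin n)) :
    ∃ e : Ext (ModuleCat.of (MvPolynomial (Fin n) K) (MvPolynomial (Fin n) K ⧸ edgeIdeal K ⊥ T))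
      (ModuleCat.of (MvPolynomial (Fin n) K)
        (MvPolynomial (Fin n) K ⧸ edgeIdeal K (⊥ : SimpleGraph (Fin n)) Finset.univ)) T.card,
      e ≠ 0 := by
  induction T using Finset.induction_on with
  | empty =>
    refine ⟨Ext.mk₀ (ModuleCat.ofHom (Submodule.mapQ _ _ LinearMap.id ?_)), fun h0 => ?_⟩
    · rw [edgeIdeal_bot_empty]
      exact bot_le
    · replace h0 := (Ext.mk₀_bijective _ _).1 (h0.trans (Ext.mk₀_zero _ _).symm)
      have h1 := congrArg (fun f => f.hom (Submodule.Quotient.mk 1)) h0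
      have h2 : (1 : MvPolynomial (Fin n) K) ∈
          edgeIdeal K (⊥ : SimpleGraph (Fin n)) Finset.univ :=
        (Submodule.Quotient.mk_eq_zero _).1 h1
      rw [mem_edgeIdeal] at h2
      have := h2 0 (by simp)
      simp at this
  | insert v T hv ih =>
    rw [Finset.card_insert_of_notMem hv, ← edgeIdeal_sup_X]
    refine ext_ne_zero_of_regular (edgeIdeal_bot_regular hv) _ (fun y => ?_) ih
    obtain ⟨y, rfl⟩ := Submodule.Quotient.mk_surjective _ y
    refine (Submodule.Quotient.mk_eq_zero _).2 ?_
    change X v * y ∈ _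
    refine Ideal.mul_mem_right _ _ (Ideal.subset_span ⟨Finsupp.single v 1, ?_, rfl⟩)
    exact Or.inl ⟨v, Finset.mem_univ v, rfl⟩

/-- The residue field `K = S/(x_1, …, x_n)` has projective dimension at least `n`. -/
theorem not_pdLE_edgeIdeal_univ (G : SimpleGraph (Fin n)) {d : ℕ} (hd : d < n) :
    ¬ pdLE (edgeIdeal K G Finset.univ) d := by
  rw [edgeIdeal_eq_bot_graph (fun a _ _ => Or.inl (Finset.mem_univ a))]
  intro h
  obtain ⟨e, he⟩ := ext_edgeIdeal_bot_ne_zero (K := K) (Finset.univ : Finset (Fin n))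
  have h' : HasProjectiveDimensionLT (ModuleCat.of (MvPolynomial (Fin n) K)
    (MvPolynomial (Fin n) K ⧸ edgeIdeal K (⊥ : SimpleGraph (Fin n)) Finset.univ)) (d + 1) := h
  exact he (e.eq_zero_of_hasProjectiveDimensionLT (d + 1) (by simpa using hd))

/-! ### Bounds from isolated vertices and from a connected complement -/

/-- If the vertices of `U` are isolated in `G - T`, then `S/(I(G) + (x_t : t ∈ T))` has projective
dimension at most `n - |U|`. -/
theorem pdLE_of_isolated (G : SimpleGraph (Fin n)) (T U : Finset (Fin n)) {d : ℕ}
    (hTU : Disjoint T U) (hU : ∀ u ∈ U, ∀ w, G.Adj u w → w ∈ T) (hd : n ≤ d + U.card) :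
    pdLE (edgeIdeal K G T) d := by
  induction hN : Tᶜ.card using Nat.strong_induction_on generalizing T U with
  | _ N ih =>
  subst hN
  by_cases h : ∃ v w, G.Adj v w ∧ v ∉ T ∧ w ∉ T
  · obtain ⟨v, w, hvw, hv, hw⟩ := h
    have hvU : v ∉ U := fun hvU => hw (hU v hvU w hvw)
    refine pdLE_of_colon (edgeIdeal_colon_X G hv) ?_ ?_
    · refine ih _ ?_ _ U ?_ ?_ hd rfl
      · refine Finset.card_lt_card (Finset.compl_ssubset_compl.2 ?_)
        refine Finset.ssubset_iff_subset_ne.2 ⟨Finset.subset_union_left, fun he => hw ?_⟩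
        rw [he]
        simp [hvw]
      · rw [Finset.disjoint_union_left]
        refine ⟨hTU, Finset.disjoint_left.2 fun u hu huU => hv (hU u huU v ?_)⟩
        simpa using (Finset.mem_filter.1 hu).2.symm
      · exact fun u hu w hw => Finset.mem_union_left _ (hU u hu w hw)
    · rw [edgeIdeal_sup_X]
      refine ih _ ?_ _ U ?_ ?_ hd rfl
      · refine Finset.card_lt_card (Finset.compl_ssubset_compl.2 (Finset.ssubset_insert hv))
      · rw [Finset.disjoint_insert_left]
        exact ⟨hvU, hTU⟩
      · exact fun u hu w hw => Finset.mem_insert_of_mem (hU u hu w hw)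
  · rw [edgeIdeal_eq_bot_graph (fun a b hab => by by_contra! hc; exact h ⟨a, b, hab, hc⟩)]
    refine (pdLE_edgeIdeal_bot T).mono ?_
    have := Finset.card_le_univ (T ∪ U)
    rw [Finset.card_union_of_disjoint hTU, Fintype.card_fin] at this
    omega

/-- The bound of `pdLE_of_isolated` improves by one when some vertex lies outside `T ∪ U`. For an
edge `vw` of `G - T`, the vertex `v` becomes isolated in the colon by `x_v`, and `w` remains after
adding `x_v`. -/
theorem pdLE_of_isolated_of_exists (G : SimpleGraph (Fin n)) (T U : Finset (Fin n)) {d : ℕ}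
    (hTU : Disjoint T U) (hU : ∀ u ∈ U, ∀ w, G.Adj u w → w ∈ T) (hx : ∃ x, x ∉ T ∧ x ∉ U)
    (hd : n ≤ d + U.card + 1) :
    pdLE (edgeIdeal K G T) d := by
  induction hN : Tᶜ.card using Nat.strong_induction_on generalizing T with
  | _ N ih =>
  subst hN
  by_cases h : ∃ v w, G.Adj v w ∧ v ∉ T ∧ w ∉ T
  · obtain ⟨v, w, hvw, hv, hw⟩ := h
    have hvU : v ∉ U := fun hvU => hw (hU v hvU w hvw)
    have hwU : w ∉ U := fun hwU => hv (hU w hwU v hvw.symm)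
    refine pdLE_of_colon (edgeIdeal_colon_X G hv) ?_ ?_
    · refine pdLE_of_isolated G _ (insert v U) ?_ ?_ ?_
      · rw [Finset.disjoint_union_left, Finset.disjoint_insert_right]
        refine ⟨⟨hv, hTU⟩, Finset.disjoint_left.2 fun u hu huU => ?_⟩
        have hvu : G.Adj v u := (Finset.mem_filter.1 hu).2
        rcases Finset.mem_insert.1 huU with rfl | huU
        · exact hvu.ne rfl
        · exact hv (hU u huU v hvu.symm)
      · intro u hu y hy
        rcases Finset.mem_insert.1 hu with rfl | hu
        · simp [hy]
        · exact Finset.mem_union_left _ (hU u hu y hy)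
      · rw [Finset.card_insert_of_notMem hvU]
        omega
    · rw [edgeIdeal_sup_X]
      refine ih _ ?_ _ ?_ ?_ ⟨w, ?_, hwU⟩ rfl
      · refine Finset.card_lt_card (Finset.compl_ssubset_compl.2 (Finset.ssubset_insert hv))
      · rw [Finset.disjoint_insert_left]
        exact ⟨hvU, hTU⟩
      · exact fun u hu w hw => Finset.mem_insert_of_mem (hU u hu w hw)
      · simp [hw, hvw.ne']
  · rw [edgeIdeal_eq_bot_graph (fun a b hab => by by_contra! hc; exact h ⟨a, b, hab, hc⟩)]
    refine (pdLE_edgeIdeal_bot T).mono ?_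
    obtain ⟨x, hxT, hxU⟩ := hx
    have := Finset.card_lt_univ_of_notMem (s := T ∪ U) (x := x) (by simp [hxT, hxU])
    rw [Finset.card_union_of_disjoint hTU, Fintype.card_fin] at this
    omega

/-- The vertex set `s` has at least two elements and is built one vertex at a time, each new
vertex being a non-neighbour in `G` of an earlier one; equivalently, the complement of `G` is
connected on `s`. -/
inductive CoBuild (G : SimpleGraph (Fin n)) : Finset (Fin n) → Prop
  | pair (a b : Fin n) (hab : a ≠ b) (h : ¬ G.Adj a b) : CoBuild G {a, b}
  | step (s : Finset (Fin n)) (v w : Fin n) (hs : CoBuild G s) (hv : v ∉ s) (hw : w ∈ s)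
      (h : ¬ G.Adj v w) : CoBuild G (insert v s)

theorem CoBuild.union {G : SimpleGraph (Fin n)} {s : Finset (Fin n)} (hs : CoBuild G s)
    (t : Finset (Fin n)) (ht : ∀ v ∈ t, v ∉ s → ∃ w ∈ s, ¬ G.Adj v w) : CoBuild G (s ∪ t) := by
  induction t using Finset.induction_on with
  | empty => simpa using hs
  | insert v t hv ih =>
    have ih' := ih fun x hx => ht x (Finset.mem_insert_of_mem hx)
    rw [Finset.union_insert]
    by_cases hvs : v ∈ s ∪ t
    · rwa [Finset.insert_eq_of_mem hvs]
    · obtain ⟨w, hw, hvw⟩ := ht v (Finset.mem_insert_self v t)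
        fun h => hvs (Finset.mem_union_left _ h)
      exact CoBuild.step _ v w ih' hvs (Finset.mem_union_left _ hw) hvw

/-- If the complement of `G` is connected on `s`, then `S/(I(G) + (x_t : t ∉ s))` has projective
dimension at most `n - 2`. For the vertex `v` added last, with non-neighbour `w`, the colon by `x_v`
leaves `v` isolated and does not contain `x_w`, so `pdLE_of_isolated_of_exists` applies. -/
theorem pdLE_of_coBuild {G : SimpleGraph (Fin n)} {s : Finset (Fin n)} (hs : CoBuild G s) {d : ℕ}
    (hd : n ≤ d + 2) : pdLE (edgeIdeal K G sᶜ) d := by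
  induction hs with
  | pair a b hab h =>
    rw [edgeIdeal_eq_bot_graph]
    · refine (pdLE_edgeIdeal_bot _).mono ?_
      rw [Finset.card_compl, Finset.card_pair hab, Fintype.card_fin]
      omega
    · intro x y hxy
      by_contra! hc
      simp only [Finset.mem_compl, not_not, Finset.mem_insert, Finset.mem_singleton] at hc
      obtain ⟨rfl | rfl, rfl | rfl⟩ := hc
      · exact hxy.ne rfl
      · exact h hxy
      · exact h hxy.symm
      · exact hxy.ne rfl
  | step s v w hs hv hw h ih =>
    have hvT : v ∉ (insert v s)ᶜ := by simp
    have hwv : w ≠ v := by rintro rfl; exact hv hw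
    refine pdLE_of_colon (edgeIdeal_colon_X G hvT) ?_ ?_
    · refine pdLE_of_isolated_of_exists G _ {v} ?_ ?_ ⟨w, ?_, ?_⟩ (by simpa using hd)
      · simp
      · intro u hu y hy
        obtain rfl := Finset.mem_singleton.1 hu
        simp [hy]
      · simp [hw, h]
      · simpa using hwv
    · rw [edgeIdeal_sup_X]
      convert ih using 2
      ext x
      by_cases hx : x = v <;> simp [hx, hv]

/-- If `A` and its complement are nonempty and completely joined in `G`, then `S/I(G)` has
projective dimension at least `n - 1`. -/
theorem not_pdLE_of_join {G : SimpleGraph (Fin n)} {A : Finset (Fin n)} {x y : Fin n}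
    (hx : x ∈ A) (hy : y ∉ A) (h : ∀ a ∈ A, ∀ b ∉ A, G.Adj a b) {d : ℕ} (hd : d + 2 ≤ n) :
    ¬ pdLE (edgeIdeal K G ∅) d := by
  intro hp
  obtain ⟨e, rfl⟩ : ∃ e, n = e + 2 := ⟨n - 2, by omega⟩
  have h₁ : pdLE (edgeIdeal K G A) (e + 1) :=
    pdLE_of_isolated_of_exists G A ∅ (by simp) (by simp) ⟨y, hy, by simp⟩ (by simp)
  have h₂ : pdLE (edgeIdeal K G Aᶜ) (e + 1) :=
    pdLE_of_isolated_of_exists G Aᶜ ∅ (by simp) (by simp) ⟨x, by simp [hx], by simp⟩ (by simp)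
  have hle : ∀ T, edgeIdeal K G ∅ ≤ edgeIdeal K G T := fun T => by
    have := edgeIdeal_sup (K := K) G ∅ T
    rw [Finset.empty_union] at this
    exact this ▸ le_sup_left
  -- The sum of the two ideals is the maximal ideal, whose quotient would get projective dimension
  -- at most `n - 1`.
  have h3 := pdLE_sup_of_inf (hle A) (hle Aᶜ) ?_ (hp.mono (show d ≤ e by omega)) h₁ h₂
  · rw [edgeIdeal_sup, Finset.union_compl] at h3
    exact not_pdLE_edgeIdeal_univ G (by omega) h3
  · rintro p ⟨hpA, hpB⟩
    have hpA' := mem_edgeIdeal.1 hpA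
    have hpB' := mem_edgeIdeal.1 hpB
    refine mem_edgeIdeal.2 fun m hm => Or.inr ?_
    rcases hpA' m hm with ⟨a, ha, hma⟩ | h1
    · rcases hpB' m hm with ⟨b, hb, hmb⟩ | h1
      · exact ⟨a, b, h a ha b (by simpa using hb), hma, hmb⟩
      · exact h1
    · exact h1
end Graph

/-! ### The lexsegment graph -/

section Lex

/-- The graph whose edges are the pairs in `L(u, v)`; the vertex `a : Fin n` stands for the
variable with 1-based index `a + 1`. -/
def lexGraph (n : ℕ) (u v : ℕ × ℕ) : SimpleGraph (Fin n) :=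
  SimpleGraph.fromRel fun a b => (a.1 + 1, b.1 + 1) ∈ lexSegSet n u v

theorem lexSegIdeal_eq_edgeIdeal (K : Type) [Field K] (n : ℕ) (u v : ℕ × ℕ) :
    lexSegIdeal K n u v = edgeIdeal K (lexGraph n u v) ∅ := by
  rw [lexSegIdeal, edgeIdeal]
  congr 1
  have hX : ∀ a b : Fin n, monomial (Finsupp.single a 1 + Finsupp.single b 1) (1 : K) =
      xv K n (a.1 + 1) * xv K n (b.1 + 1) := fun a b => by
    simp [xv, X, monomial_mul]
  ext p
  constructor
  · rintro ⟨⟨c, d⟩, hw, rfl⟩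
    obtain ⟨h1, h2, h3⟩ := hw.1
    simp only at h1 h2 h3
    obtain ⟨a, rfl⟩ : ∃ a : Fin n, c = a.1 + 1 := ⟨⟨c - 1, by omega⟩, by simp; omega⟩
    obtain ⟨b, rfl⟩ : ∃ b : Fin n, d = b.1 + 1 := ⟨⟨d - 1, by omega⟩, by simp; omega⟩
    refine ⟨_, Or.inr ⟨a, b, ⟨?_, Or.inl hw⟩, rfl⟩, hX a b⟩
    rintro rfl
    omega
  · rintro ⟨s, ⟨t, ht, -⟩ | ⟨a, b, ⟨-, hab | hab⟩, rfl⟩, rfl⟩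
    · simp at ht
    · exact ⟨_, hab, (hX a b).symm⟩
    · refine ⟨_, hab, ?_⟩
      rw [add_comm (Finsupp.single a 1)]
      exact (hX b a).symm

theorem lexGraph_adj {n i j k : ℕ} {a b : Fin n} (hab : a < b) :
    (lexGraph n (1, i) (j, k)).Adj a b ↔
      (0 < a.1 ∨ i ≤ b.1 + 1) ∧ (a.1 + 1 < j ∨ (a.1 + 1 = j ∧ b.1 + 1 ≤ k)) := by
  have hab' : a.1 < b.1 := hab
  have := b.2
  have hne : a ≠ b := hab.ne
  simp only [lexGraph, SimpleGraph.fromRel_adj, lexSegSet, validPair, lexGE, Set.mem_ofPred_eq]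
  simp only [ne_eq, hne, not_false_eq_true, true_and]
  omega
end Lex

/-- For the lexsegment edge ideal `I = (L(x_1 x_i, x_j x_k))`
with `3 ≤ i ≤ n`, `2 ≤ j < k ≤ n` and `u >_lex v`, one has
`projdim_S(S/I) = n - 1` if and only if `x_{i-1} x_n ≥_lex x_j x_k`. -/
theorem lexSegIdeal_projDim_eq_iff (K : Type) [Field K] (n i j k : ℕ)
    (hi3 : 3 ≤ i) (hin : i ≤ n) (hj : 2 ≤ j) (hjk : j < k) (hkn : k ≤ n)
    (huv : lexGT (1, i) (j, k)) :
    projDim (ModuleCat.of (MvPolynomial (Fin n) K)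
        (MvPolynomial (Fin n) K ⧸ lexSegIdeal K n (1, i) (j, k))) = n - 1
      ↔ lexGE (i - 1, n) (j, k) := by
  have hG := lexSegIdeal_eq_edgeIdeal K n (1, i) (j, k)
  obtain ⟨e, rfl⟩ : ∃ e, n = e + 2 := ⟨n - 2, by omega⟩
  have hup : pdLE (lexSegIdeal K (e + 2) (1, i) (j, k)) (e + 1) := by
    rw [hG]
    exact pdLE_of_isolated_of_exists _ ∅ ∅ (by simp) (by simp) ⟨0, by simp, by simp⟩ (by simp)
  rw [show e + 2 - 1 = e + 1 from rfl, projDim_eq_succ_iff e _ hup]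
  change ¬ pdLE (lexSegIdeal K (e + 2) (1, i) (j, k)) e ↔ _
  rw [hG]
  simp only [lexGE]
  constructor
  · intro hnot
    by_contra hc
    refine hnot ?_
    -- The vertices `1`, `i - 1` and `n`: in the complement, `i - 1` is adjacent to `1` and `n`, and every
    -- other vertex is adjacent to `1` (if below `i`) or to `n` (if above `i - 1`).
    let x : Fin (e + 2) := ⟨0, by omega⟩
    let y : Fin (e + 2) := ⟨i - 2, by omega⟩
    let z : Fin (e + 2) := ⟨e + 1, by omega⟩
    have hxy : x < y := by simp only [x, y, Fin.lt_def]; omega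
    have hyz : y < z := by simp only [y, z, Fin.lt_def]; omega
    have b1 : CoBuild (lexGraph (e + 2) (1, i) (j, k)) {x, y} := by
      refine CoBuild.pair x y hxy.ne ?_
      rw [lexGraph_adj hxy]
      simp only [x, y]
      omega
    have b2 := b1.union {z} fun v hv _ => by
      obtain rfl := Finset.mem_singleton.1 hv
      refine ⟨y, by simp, ?_⟩
      rw [SimpleGraph.adj_comm, lexGraph_adj hyz]
      simp only [y, z]
      omega
    have b3 := b2.union Finset.univ fun v _ hv => by
      simp only [Finset.mem_union, Finset.mem_insert, Finset.mem_singleton, not_or] at hv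
      have hx : x < v := lt_of_le_of_ne (Nat.zero_le _) (Ne.symm hv.1.1)
      have hz : v < z := lt_of_le_of_ne (Nat.le_of_lt_succ v.2) hv.2
      rcases lt_or_gt_of_ne hv.1.2 with hlt | hlt
      · refine ⟨x, by simp, ?_⟩
        rw [SimpleGraph.adj_comm, lexGraph_adj hx]
        simp only [y, Fin.lt_def] at hlt
        simp only [x]
        omega
      · refine ⟨z, by simp, ?_⟩
        rw [lexGraph_adj hz]
        simp only [y, Fin.lt_def] at hlt
        omega
    have b4 := pdLE_of_coBuild (K := K) b3 (le_refl (e + 2))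
    simpa using b4
  · intro hc
    -- The vertices `1, …, i - 1` are joined to all of `i, …, n`.
    refine not_pdLE_of_join (A := Finset.univ.filter fun a : Fin (e + 2) => a.1 + 1 < i)
      (x := ⟨0, by omega⟩) (y := ⟨i - 1, by omega⟩) ?_ ?_ ?_ le_rfl
    · simp; omega
    · simp; omega
    · intro a ha b hb
      simp only [Finset.mem_filter, Finset.mem_univ, true_and, not_lt] at ha hb
      have hab : a < b := by rw [Fin.lt_def]; omega
      have := b.2
      rw [lexGraph_adj hab]
      omega
end
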